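/- For Lebesgue-almost every x ∈ I, the pointwise Hölder exponents of both components of Cantor's bijection satisfy h_{f_1}(x) ∈ [ log K_0 / (2 log K_1) , log K_1 / (2 log K_0) ] and h_{f_2}(x) ∈ [ log K_0 / (2 log K_1) , log K_1 / (2 log K_0) ]. -/

import Mathlib

open Filter Finset MeasureTheory

/-- `qden a n` is the denominator `q_n` of the continued fraction with partial
quotients `a_1 = a 0, a_2 = a 1, …` (0-indexed sequence `a`), defined by
`q_0 = 1`, `q_1 = a_1`, `q_n = a_n q_{n-1} + q_{n-2}`. -/
def qden (a : ℕ → ℕ+) : ℕ → ℕ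
  | 0 => 1
  | 1 => a 0
  | (n+2) => (a (n+1) : ℕ) * qden a (n+1) + qden a n

/-- `pnum a n` is the numerator `p_n`, defined by `p_0 = 0`, `p_1 = 1`,
`p_n = a_n p_{n-1} + p_{n-2}`. -/
def pnum (a : ℕ → ℕ+) : ℕ → ℕ
  | 0 => 0
  | 1 => 1
  | (n+2) => (a (n+1) : ℕ) * pnum a (n+1) + pnum a n

/-- The value `[a_1, a_2, …]` of the infinite continued fraction with partial quotients
`a_1 = a 0, a_2 = a 1, …`, i.e. the limit of the convergents `p_n / q_n` (which always
exists). -/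
noncomputable def cfVal (a : ℕ → ℕ+) : ℝ :=
  limUnder atTop (fun n => (pnum a n : ℝ) / (qden a n : ℝ))

/-- The set `I` of irrational numbers of `[0,1]`. -/
def Iirr : Set ℝ := {x | x ∈ Set.Icc (0:ℝ) 1 ∧ Irrational x}

/-- The (unique) sequence of partial quotients of `x`, when `x` has a continued
fraction expansion. -/
noncomputable def coeff (x : ℝ) : ℕ → ℕ+ := by
  classical
  exact if h : ∃ a : ℕ → ℕ+, cfVal a = x then h.choose else fun _ => 1

/-- First component of Cantor's bijection: `f₁([a_1,a_2,…]) = [a_1,a_3,a_5,…]`. -/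
noncomputable def cantorF1 (x : ℝ) : ℝ := cfVal (fun j => coeff x (2*j))

/-- Second component of Cantor's bijection: `f₂([a_1,a_2,…]) = [a_2,a_4,a_6,…]`. -/
noncomputable def cantorF2 (x : ℝ) : ℝ := cfVal (fun j => coeff x (2*j+1))

/-- `g ∈ Λ^α(x)`, where `g` is viewed as a function on the set `A`. -/
def memHolder (g : ℝ → ℝ) (A : Set ℝ) (x : ℝ) (α : ℝ) : Prop :=
  ∃ C > 0, ∀ y ∈ A, |g x - g y| ≤ C * |x - y| ^ α

/-- The pointwise Hölder exponent `h_g(x)` of `g : A → ℝ` at `x`. -/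
noncomputable def holderExp (g : ℝ → ℝ) (A : Set ℝ) (x : ℝ) : ℝ :=
  sSup {α : ℝ | α ∈ Set.Icc (0:ℝ) 1 ∧ memHolder g A x α}

/-- The Khintchine-type constant `K_k = ∏_{j=1}^∞ (1 + 1/(j(j+2)))^{log(j+k)/log 2}`. -/
noncomputable def Kconst (k : ℕ) : ℝ :=
  ∏' j : ℕ, (1 + 1 / (((j:ℝ)+1) * ((j:ℝ)+3))) ^ (Real.log ((j:ℝ)+1+(k:ℝ)) / Real.log 2)

/-!
If two expansions first differ at the `n`-th partial quotient, the distance between their values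
is, up to finitely many further digits and constants, between `∏ (a_i + 1)⁻²` and `∏ a_i⁻²`, the
products running over the first `n` digits, because the denominator `q_n` of the common convergent
lies between `∏ a_i` and `∏ (a_i + 1)`. Keeping every second digit turns agreement of length `n`
into agreement of length `n / 2`; comparing the two products gives Hölder regularity below the
lower bound, and changing a single kept digit of `x` excludes Hölder regularity above the upper one.
Both bounds are ratios of limits of `(1 / n) ∑ log (a_i + k)` for `k = 0, 1`, along all digits and
along every second one. Almost surely both limits are `log K_k`, by Birkhoff's theorem for the Gauss
map and for its iterates: these preserve the Gauss measure, and they are ergodic because around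
almost every point their inverse branches have bounded distortion, so that an invariant set which
is not null has positive density at almost every point.
-/

open scoped Topology

section Continuants

variable (a : ℕ → ℕ+)

lemma qden_pos : ∀ n, 0 < qden a n
  | 0 => Nat.one_pos
  | 1 => (a 0).pos
  | n + 2 => Nat.add_pos_right _ (qden_pos n)

lemma qden_le_qden_succ : ∀ n, qden a n ≤ qden a (n + 1)
  | 0 => (a 0).pos
  | n + 1 => (Nat.le_mul_of_pos_left _ (a (n + 1)).pos).trans (Nat.le_add_right _ _)

lemma pnum_le_qden : ∀ n, pnum a n ≤ qden a n
  | 0 => Nat.zero_le _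
  | 1 => (a 0).pos
  | n + 2 => Nat.add_le_add (Nat.mul_le_mul_left _ (pnum_le_qden (n + 1))) (pnum_le_qden n)

lemma pnum_succ_mul_qden_sub : ∀ n,
    (pnum a (n + 1) : ℝ) * qden a n - pnum a n * qden a (n + 1) = (-1) ^ n
  | 0 => by simp [qden, pnum]
  | n + 1 => by
    have ih := pnum_succ_mul_qden_sub n
    simp only [qden, pnum, Nat.cast_add, Nat.cast_mul, pow_succ] at ih ⊢
    linear_combination -ih

lemma pnum_succ_eq_qden_shift : ∀ n, pnum a (n + 1) = qden (fun j => a (j + 1)) n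
  | 0 => rfl
  | 1 => by simp [qden, pnum]
  | n + 2 => by rw [pnum, pnum_succ_eq_qden_shift n, pnum_succ_eq_qden_shift (n + 1), qden]

lemma qden_succ_eq_shift : ∀ n,
    qden a (n + 1) = a 0 * qden (fun j => a (j + 1)) n + pnum (fun j => a (j + 1)) n
  | 0 => by simp [qden, pnum]
  | 1 => by simp [qden, pnum, mul_comm]
  | n + 2 => by
    rw [qden, qden_succ_eq_shift n, qden_succ_eq_shift (n + 1)]
    simp only [qden, pnum]
    ring

lemma two_mul_qden_le (n : ℕ) : 2 * qden a n ≤ qden a (n + 2) := by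
  rw [two_mul]
  exact Nat.add_le_add_right ((qden_le_qden_succ a n).trans
    (Nat.le_mul_of_pos_left _ (a (n + 1)).pos)) _

lemma two_pow_le_qden_mul_qden_succ : ∀ n, 2 ^ n ≤ qden a n * qden a (n + 1)
  | 0 => Nat.mul_pos Nat.one_pos (a 0).pos
  | n + 1 => calc
      2 ^ (n + 1) ≤ qden a n * qden a (n + 1) * 2 :=
        Nat.mul_le_mul_right 2 (two_pow_le_qden_mul_qden_succ n)
      _ = qden a (n + 1) * (2 * qden a n) := by ring
      _ ≤ qden a (n + 1) * qden a (n + 2) := Nat.mul_le_mul_left _ (two_mul_qden_le a n)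

lemma tendsto_inv_qden_sq : Tendsto (fun n => ((qden a n : ℝ) ^ 2)⁻¹) atTop (𝓝 0) := by
  refine (tendsto_add_atTop_iff_nat 1).1 (squeeze_zero (fun n => by positivity) (fun n => ?_)
    (tendsto_pow_atTop_nhds_zero_of_lt_one (r := (2⁻¹ : ℝ)) (by norm_num) (by norm_num)))
  rw [inv_pow]
  have h : 2 ^ n ≤ qden a (n + 1) ^ 2 := by
    rw [sq]
    exact (two_pow_le_qden_mul_qden_succ a n).trans
      (Nat.mul_le_mul_right _ (qden_le_qden_succ a n))
  exact inv_anti₀ (by positivity) (by exact_mod_cast h)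

end Continuants

section Value

variable (a : ℕ → ℕ+)

lemma tendsto_pnum_div_qden :
    Tendsto (fun n => (pnum a n : ℝ) / (qden a n : ℝ)) atTop (𝓝 (cfVal a)) := by
  refine (cauchySeq_of_le_geometric (1 / 2) 1 (by norm_num) fun n => ?_).tendsto_limUnder
  have h₀ : (0 : ℝ) < qden a n := by exact_mod_cast qden_pos a n
  have h₁ : (0 : ℝ) < qden a (n + 1) := by exact_mod_cast qden_pos a (n + 1)
  have h₂ : (2 : ℝ) ^ n ≤ qden a (n + 1) * qden a n := by
    rw [mul_comm]
    exact_mod_cast two_pow_le_qden_mul_qden_succ a n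
  have hdet : (pnum a (n + 1) : ℝ) * qden a n - qden a (n + 1) * pnum a n = (-1) ^ n := by
    rw [← pnum_succ_mul_qden_sub a n, mul_comm (qden a (n + 1) : ℝ)]
  rw [dist_comm, Real.dist_eq, div_sub_div _ _ h₁.ne' h₀.ne', hdet, abs_div, abs_neg_one_pow,
    abs_of_pos (mul_pos h₁ h₀), one_mul, one_div_pow]
  exact one_div_le_one_div_of_le (by positivity) h₂

lemma cfVal_mem_Icc : cfVal a ∈ Set.Icc (0 : ℝ) 1 := by
  refine isClosed_Icc.mem_of_tendsto (tendsto_pnum_div_qden a) (.of_forall fun n => ?_)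
  exact ⟨by positivity, div_le_one_of_le₀ (by exact_mod_cast pnum_le_qden a n) (by positivity)⟩

lemma one_le_cast_pnat (m : ℕ+) : (1 : ℝ) ≤ m := Nat.one_le_cast.2 m.pos

lemma cfVal_eq_inv : cfVal a = ((a 0 : ℝ) + cfVal (fun j => a (j + 1)))⁻¹ := by
  have h₀ := (cfVal_mem_Icc fun j => a (j + 1)).1
  refine tendsto_nhds_unique ((tendsto_pnum_div_qden a).comp (tendsto_add_atTop_nat 1)) ?_
  refine (((tendsto_pnum_div_qden fun j => a (j + 1)).const_add (a 0 : ℝ)).inv₀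
    (by positivity)).congr fun n => ?_
  have hpos : (0 : ℝ) < qden (fun j => a (j + 1)) n := by exact_mod_cast qden_pos _ n
  simp only [Function.comp_apply, pnum_succ_eq_qden_shift a, qden_succ_eq_shift a]
  push_cast
  field_simp

lemma cfVal_pos : 0 < cfVal a := by
  have h₀ := (cfVal_mem_Icc fun j => a (j + 1)).1
  rw [cfVal_eq_inv]
  positivity

lemma cfVal_lt_one : cfVal a < 1 := by
  rw [cfVal_eq_inv]
  exact inv_lt_one_of_one_lt₀ (by linarith [cfVal_pos fun j => a (j + 1), one_le_cast_pnat (a 0)])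

lemma abs_cfVal_sub_cfVal_le_one (b : ℕ → ℕ+) : |cfVal a - cfVal b| ≤ 1 :=
  abs_sub_le_iff.2 ⟨by linarith [cfVal_lt_one a, cfVal_pos b],
    by linarith [cfVal_lt_one b, cfVal_pos a]⟩

/- A rational value would be a fraction `r / s`; one step of the expansion produces a value with
the smaller denominator `r`, and this cannot go on forever. -/
lemma cfVal_mul_natCast_ne_intCast {s : ℕ} (hs : 0 < s) (r : ℤ) : cfVal a * s ≠ r := by
  induction s using Nat.strong_induction_on generalizing a r with
  | _ s ih =>
    intro h
    have hs' : (0 : ℝ) < s := by exact_mod_cast hs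
    have hr_pos : (0 : ℝ) < r := h ▸ mul_pos (cfVal_pos a) hs'
    have hr_lt : (r : ℝ) < s := h ▸ mul_lt_of_lt_one_left hs' (cfVal_lt_one a)
    lift r to ℕ using by exact_mod_cast hr_pos.le
    refine ih r (by exact_mod_cast hr_lt) (fun j => a (j + 1)) (by exact_mod_cast hr_pos)
      (s - (a 0 : ℕ) * r) ?_
    have hden : (a 0 : ℝ) + cfVal (fun j => a (j + 1)) ≠ 0 := by
      linarith [one_le_cast_pnat (a 0), cfVal_pos fun j => a (j + 1)]
    have hrec := cfVal_eq_inv a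
    rw [← one_div, eq_div_iff hden] at hrec
    push_cast at h ⊢
    linear_combination (s : ℝ) * hrec - h * ((a 0 : ℝ) + cfVal (fun j => a (j + 1)))

lemma cfVal_mem_Iirr : cfVal a ∈ Iirr := by
  refine ⟨cfVal_mem_Icc a, ?_⟩
  rintro ⟨q, hq⟩
  refine cfVal_mul_natCast_ne_intCast a q.den_pos q.num ?_
  rw [← hq]
  exact_mod_cast Rat.mul_den_eq_num q

lemma floor_inv_cfVal : ⌊(cfVal a)⁻¹⌋₊ = (a 0 : ℕ) := by
  rw [cfVal_eq_inv, inv_inv, add_comm, Nat.floor_add_natCast (cfVal_pos _).le,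
    Nat.floor_eq_zero.2 (cfVal_lt_one _), zero_add]

lemma cfVal_injective : Function.Injective cfVal := by
  suffices h : ∀ n (a b : ℕ → ℕ+), cfVal a = cfVal b → a n = b n from
    fun a b hab => funext fun n => h n a b hab
  intro n
  induction n with
  | zero => exact fun a b h => PNat.coe_injective (by rw [← floor_inv_cfVal, h, floor_inv_cfVal])
  | succ _ ih =>
    intro a b h
    have h₀ : a 0 = b 0 := PNat.coe_injective (by rw [← floor_inv_cfVal, h, floor_inv_cfVal])
    rw [cfVal_eq_inv a, cfVal_eq_inv b, h₀] at h
    exact ih _ _ (add_left_cancel (inv_injective h))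

lemma coeff_cfVal : coeff (cfVal a) = a := by
  have h : ∃ b, cfVal b = cfVal a := ⟨a, rfl⟩
  rw [coeff, dif_pos h]
  exact cfVal_injective h.choose_spec

end Value

section InverseBranches

/-- `invBranch a n t = [a_1, …, a_n + t]`: the branch, coded by the first `n` partial quotients of
`a`, of the inverse of the `n`-th iterate of the Gauss map. -/
noncomputable def invBranch (a : ℕ → ℕ+) : ℕ → ℝ → ℝ
  | 0, t => t
  | n + 1, t => invBranch a n ((a n : ℝ) + t)⁻¹

lemma invBranch_congr {a b : ℕ → ℕ+} {n : ℕ} (h : ∀ i < n, a i = b i) (t : ℝ) :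
    invBranch a n t = invBranch b n t := by
  induction n generalizing t with
  | zero => rfl
  | succ n ih =>
    rw [invBranch, invBranch, h n n.lt_succ_self]
    exact ih (fun i hi => h i (hi.trans n.lt_succ_self)) _

variable (a : ℕ → ℕ+)

lemma cfVal_eq_invBranch (n : ℕ) : cfVal a = invBranch a n (cfVal fun j => a (j + n)) := by
  induction n with
  | zero => rfl
  | succ n ih =>
    rw [ih, invBranch, cfVal_eq_inv]
    simp only [zero_add, add_assoc, add_comm 1 n]

lemma invBranch_succ_eq_div : ∀ (n : ℕ) {t : ℝ}, 0 ≤ t →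
    invBranch a (n + 1) t = (pnum a (n + 1) + t * pnum a n) / (qden a (n + 1) + t * qden a n)
  | 0, t, _ => by simp [invBranch, pnum, qden]
  | n + 1, t, ht => by
    have h₀ : (0 : ℝ) < qden a n := by exact_mod_cast qden_pos a n
    have h₁ : (0 : ℝ) < qden a (n + 1) := by exact_mod_cast qden_pos a (n + 1)
    rw [invBranch, invBranch_succ_eq_div n (by positivity)]
    simp only [qden, pnum]
    push_cast
    rw [div_eq_div_iff (by positivity) (by positivity)]
    field_simp
    ring

variable {s t : ℝ}

lemma abs_invBranch_succ_sub (n : ℕ) (hs : 0 ≤ s) (ht : 0 ≤ t) :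
    |invBranch a (n + 1) s - invBranch a (n + 1) t| =
      |s - t| / ((qden a (n + 1) + s * qden a n) * (qden a (n + 1) + t * qden a n)) := by
  have h₁ : (0 : ℝ) < qden a (n + 1) := by exact_mod_cast qden_pos a (n + 1)
  rw [invBranch_succ_eq_div a n hs, invBranch_succ_eq_div a n ht,
    div_sub_div _ _ (by positivity) (by positivity), abs_div,
    abs_of_pos (a := _ * _) (by positivity)]
  have hnum : ((pnum a (n + 1) + s * pnum a n) * (qden a (n + 1) + t * qden a n) -
      (qden a (n + 1) + s * qden a n) * (pnum a (n + 1) + t * pnum a n) : ℝ) =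
      (-1) ^ n * (t - s) := by
    rw [← pnum_succ_mul_qden_sub a n]
    ring
  rw [hnum, abs_mul, abs_neg_one_pow, one_mul, abs_sub_comm]

lemma abs_invBranch_sub_le (n : ℕ) (hs : 0 ≤ s) (ht : 0 ≤ t) :
    |invBranch a n s - invBranch a n t| ≤ |s - t| / (qden a n : ℝ) ^ 2 := by
  rcases n with _ | n
  · simp [invBranch, qden]
  · have h₁ : (0 : ℝ) < qden a (n + 1) := by exact_mod_cast qden_pos a (n + 1)
    rw [abs_invBranch_succ_sub a n hs ht, sq]
    gcongr <;> exact le_add_of_nonneg_right (by positivity)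

lemma le_abs_invBranch_sub (n : ℕ) (hs : s ∈ Set.Icc 0 1) (ht : t ∈ Set.Icc 0 1) :
    |s - t| / (4 * (qden a n : ℝ) ^ 2) ≤ |invBranch a n s - invBranch a n t| := by
  rcases n with _ | n
  · simp only [qden, invBranch, Nat.cast_one, one_pow, mul_one]
    linarith [abs_nonneg (s - t)]
  have h₀ : (qden a n : ℝ) ≤ qden a (n + 1) := by exact_mod_cast qden_le_qden_succ a n
  have h₁ : (0 : ℝ) < qden a (n + 1) := by exact_mod_cast qden_pos a (n + 1)
  have hden : ∀ u ∈ Set.Icc (0 : ℝ) 1, 0 < qden a (n + 1) + u * qden a n ∧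
      qden a (n + 1) + u * qden a n ≤ 2 * (qden a (n + 1) : ℝ) := fun u hu =>
    ⟨add_pos_of_pos_of_nonneg h₁ (mul_nonneg hu.1 (by positivity)), by
      linarith [mul_le_of_le_one_left (Nat.cast_nonneg (qden a n)) hu.2]⟩
  rw [abs_invBranch_succ_sub a n hs.1 ht.1]
  refine div_le_div_of_nonneg_left (abs_nonneg _) (mul_pos (hden s hs).1 (hden t ht).1) ?_
  calc _ ≤ 2 * (qden a (n + 1) : ℝ) * (2 * qden a (n + 1)) :=
        mul_le_mul (hden s hs).2 (hden t ht).2 (hden t ht).1.le (by positivity)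
    _ = 4 * (qden a (n + 1) : ℝ) ^ 2 := by ring

end InverseBranches

section DigitLogSum

/-- The logarithm of `∏ i < n, (a i + k)`. For `k = 0` and `k = 1` it bounds the logarithm of the
denominator `qden a n` from below and from above. -/
noncomputable def logDigitSum (k : ℕ) (a : ℕ → ℕ+) (n : ℕ) : ℝ :=
  ∑ i ∈ range n, Real.log ((a i : ℝ) + k)

variable (a : ℕ → ℕ+)

lemma logDigitSum_zero (k : ℕ) : logDigitSum k a 0 = 0 := sum_range_zero _

lemma logDigitSum_succ (k n : ℕ) :
    logDigitSum k a (n + 1) = logDigitSum k a n + Real.log ((a n : ℝ) + k) :=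
  sum_range_succ _ _

lemma logDigitSum_add (k n m : ℕ) :
    logDigitSum k a (n + m) = logDigitSum k a n + logDigitSum k (fun j => a (j + n)) m := by
  simp only [logDigitSum, sum_range_add, add_comm]

lemma monotone_logDigitSum (k : ℕ) : Monotone (logDigitSum k a) :=
  monotone_nat_of_le_succ fun n => by
    rw [logDigitSum_succ]
    exact le_add_of_nonneg_right (Real.log_nonneg
      ((one_le_cast_pnat (a n)).trans (le_add_of_nonneg_right k.cast_nonneg)))

lemma exp_logDigitSum_succ (k n : ℕ) :
    Real.exp (logDigitSum k a (n + 1)) = ((a n : ℝ) + k) * Real.exp (logDigitSum k a n) := by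
  rw [logDigitSum_succ, Real.exp_add, Real.exp_log (by positivity), mul_comm]

lemma exp_logDigitSum_zero_le_qden : ∀ n, Real.exp (logDigitSum 0 a n) ≤ qden a n
  | 0 => by simp [logDigitSum, qden]
  | 1 => by simp [exp_logDigitSum_succ, logDigitSum_zero, qden]
  | n + 2 => by
    have ih := exp_logDigitSum_zero_le_qden (n + 1)
    rw [exp_logDigitSum_succ, qden]
    push_cast
    rw [add_zero]
    exact (mul_le_mul_of_nonneg_left ih (by positivity)).trans
      (le_add_of_nonneg_right (by positivity))

lemma qden_le_exp_logDigitSum_one : ∀ n, (qden a n : ℝ) ≤ Real.exp (logDigitSum 1 a n)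
  | 0 => by simp [logDigitSum, qden]
  | 1 => by simp [exp_logDigitSum_succ, logDigitSum_zero, qden]
  | n + 2 => by
    have ih := qden_le_exp_logDigitSum_one (n + 1)
    have hq : (qden a n : ℝ) ≤ qden a (n + 1) := by exact_mod_cast qden_le_qden_succ a n
    rw [exp_logDigitSum_succ, qden]
    push_cast
    calc (a (n + 1) : ℝ) * qden a (n + 1) + qden a n
        ≤ ((a (n + 1) : ℝ) + 1) * qden a (n + 1) := by rw [add_one_mul]; gcongr
      _ ≤ _ := by gcongr

end DigitLogSum

section Distance

variable {a b : ℕ → ℕ+} {n : ℕ}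

lemma abs_cfVal_sub_le_of_agree (h : ∀ i < n, a i = b i) :
    |cfVal a - cfVal b| ≤ Real.exp (-(2 * logDigitSum 0 a n)) := by
  have hle := abs_invBranch_sub_le a n (cfVal_pos fun j => a (j + n)).le
    (cfVal_pos fun j => b (j + n)).le
  rw [cfVal_eq_invBranch a n, cfVal_eq_invBranch b n, ← invBranch_congr h]
  calc _ ≤ 1 / (qden a n : ℝ) ^ 2 := hle.trans (by gcongr; exact abs_cfVal_sub_cfVal_le_one _ _)
    _ ≤ 1 / Real.exp (logDigitSum 0 a n) ^ 2 := by
      gcongr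
      exact exp_logDigitSum_zero_le_qden a n
    _ = _ := by rw [Real.exp_neg, one_div, ← Real.exp_nat_mul, Nat.cast_two]

lemma inv_add_one_le_cfVal (a : ℕ → ℕ+) : ((a 0 : ℝ) + 1)⁻¹ ≤ cfVal a := by
  rw [cfVal_eq_inv]
  exact inv_anti₀ (add_pos_of_pos_of_nonneg (by positivity) (cfVal_pos _).le)
    (by linarith [cfVal_lt_one fun j => a (j + 1)])

lemma half_cfVal_shift_le_one_sub_cfVal (a : ℕ → ℕ+) :
    cfVal (fun j => a (j + 1)) / 2 ≤ 1 - cfVal a := by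
  have h₀ := cfVal_pos fun j => a (j + 1)
  have h₁ := cfVal_lt_one fun j => a (j + 1)
  have h₂ := one_le_cast_pnat (a 0)
  rw [cfVal_eq_inv a]
  calc cfVal (fun j => a (j + 1)) / 2
      ≤ cfVal (fun j => a (j + 1)) / (1 + cfVal fun j => a (j + 1)) := by gcongr; linarith
    _ = 1 - (1 + cfVal fun j => a (j + 1))⁻¹ := by field_simp; ring
    _ ≤ _ := by gcongr

/-- A lower bound for the distance from `cfVal a` to the integers. -/
noncomputable def integerGap (a : ℕ → ℕ+) : ℝ := (((a 0 : ℝ) + 1) * ((a 1 : ℝ) + 1))⁻¹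

lemma integerGap_pos (a : ℕ → ℕ+) : 0 < integerGap a := by
  unfold integerGap
  positivity

lemma integerGap_le_cfVal (a : ℕ → ℕ+) : integerGap a ≤ cfVal a := by
  refine (inv_anti₀ (by positivity) ?_).trans (inv_add_one_le_cfVal a)
  exact le_mul_of_one_le_right (by positivity) (le_add_of_nonneg_left (by positivity))

lemma integerGap_le_one_sub_cfVal (a : ℕ → ℕ+) : integerGap a ≤ 1 - cfVal a := by
  refine le_trans ?_ (half_cfVal_shift_le_one_sub_cfVal a)
  calc integerGap a ≤ (2 * ((a 1 : ℝ) + 1))⁻¹ := by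
        unfold integerGap
        gcongr
        linarith [one_le_cast_pnat (a 0)]
    _ = ((a 1 : ℝ) + 1)⁻¹ / 2 := by rw [mul_inv]; ring
    _ ≤ _ := by
      gcongr
      exact inv_add_one_le_cfVal fun j => a (j + 1)

lemma le_abs_natCast_add_sub_natCast_add {m n : ℕ} (hmn : m ≠ n) {δ s t : ℝ} (hs : δ ≤ s)
    (hs' : δ ≤ 1 - s) (ht : t ∈ Set.Icc 0 1) : δ ≤ |(m + s) - (n + t)| := by
  rcases hmn.lt_or_gt with h | h
  · have : (m : ℝ) + 1 ≤ n := by exact_mod_cast h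
    exact le_trans (by linarith [ht.1]) (neg_le_abs _)
  · have : (n : ℝ) + 1 ≤ m := by exact_mod_cast h
    exact le_trans (by linarith [ht.2]) (le_abs_self _)

lemma div_two_mul_sq_le_abs_inv_sub_inv {X Y δ : ℝ} (hX : 1 ≤ X) (hY : 0 < Y) (hδ : 0 ≤ δ)
    (hδ₁ : δ ≤ 1) (h : δ ≤ |X - Y|) : δ / (2 * X ^ 2) ≤ |X⁻¹ - Y⁻¹| := by
  have hX₀ : 0 < X := by linarith
  have hY_le : Y ≤ X + |X - Y| := by linarith [neg_le_abs (X - Y)]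
  rw [inv_sub_inv hX₀.ne' hY.ne', abs_div, abs_sub_comm, abs_of_pos (mul_pos hX₀ hY),
    div_le_div_iff₀ (by positivity) (by positivity)]
  calc δ * (X * Y) ≤ δ * (X * (X + |X - Y|)) := by gcongr
    _ = X * (δ * X) + (δ * X) * |X - Y| := by ring
    _ ≤ X * (|X - Y| * X) + (X * X) * |X - Y| := by
      gcongr
      exact hδ₁.trans hX
    _ = |X - Y| * (2 * X ^ 2) := by ring

lemma exp_neg_logDigitSum_three_le_abs_cfVal_sub (h : a 0 ≠ b 0) :
    Real.exp (-(2 * logDigitSum 1 a 3)) ≤ 2 * |cfVal a - cfVal b| := by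
  have hgap := integerGap_pos fun j => a (j + 1)
  have hdist := le_abs_natCast_add_sub_natCast_add (PNat.coe_injective.ne h)
    (integerGap_le_cfVal fun j => a (j + 1)) (integerGap_le_one_sub_cfVal fun j => a (j + 1))
    (cfVal_mem_Icc fun j => b (j + 1))
  have hX : (1 : ℝ) ≤ a 0 + cfVal fun j => a (j + 1) :=
    (one_le_cast_pnat _).trans (le_add_of_nonneg_right (cfVal_pos _).le)
  have hsep := div_two_mul_sq_le_abs_inv_sub_inv hX
    (add_pos (by positivity : (0 : ℝ) < b 0) (cfVal_pos fun j => b (j + 1))) hgap.le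
    ((integerGap_le_cfVal _).trans (cfVal_lt_one _).le) hdist
  rw [← cfVal_eq_inv, ← cfVal_eq_inv] at hsep
  have h₁ : (1 : ℝ) ≤ (((a 1 : ℝ) + 1) * ((a 2 : ℝ) + 1)) :=
    one_le_mul_of_one_le_of_one_le (by simp) (by simp)
  calc Real.exp (-(2 * logDigitSum 1 a 3))
      = ((((a 1 : ℝ) + 1) * ((a 2 : ℝ) + 1)) ^ 2)⁻¹ / ((a 0 : ℝ) + 1) ^ 2 := by
        rw [Real.exp_neg, ← Nat.cast_two, Real.exp_nat_mul]
        simp only [exp_logDigitSum_succ, logDigitSum_zero, Real.exp_zero, Nat.cast_one]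
        field_simp
    _ ≤ integerGap (fun j => a (j + 1)) / (a 0 + cfVal fun j => a (j + 1)) ^ 2 := by
        unfold integerGap
        gcongr
        · exact le_self_pow₀ h₁ two_ne_zero
        · exact (cfVal_lt_one _).le
    _ ≤ 2 * |cfVal a - cfVal b| := by
        rw [mul_comm (2 : ℝ), ← div_le_iff₀ two_pos, div_div, mul_comm _ (2 : ℝ)]
        exact hsep

lemma exp_neg_logDigitSum_le_abs_cfVal_sub (h : ∀ i < n, a i = b i) (hn : a n ≠ b n) :
    Real.exp (-(2 * logDigitSum 1 a (n + 3))) ≤ 8 * |cfVal a - cfVal b| := by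
  have htail := exp_neg_logDigitSum_three_le_abs_cfVal_sub
    (a := fun j => a (j + n)) (b := fun j => b (j + n)) (by simpa only [zero_add] using hn)
  have hbranch := le_abs_invBranch_sub a n (cfVal_mem_Icc fun j => a (j + n))
    (cfVal_mem_Icc fun j => b (j + n))
  rw [cfVal_eq_invBranch a n, cfVal_eq_invBranch b n, ← invBranch_congr h]
  have hq : (0 : ℝ) < qden a n := by exact_mod_cast qden_pos a n
  calc Real.exp (-(2 * logDigitSum 1 a (n + 3)))
      = Real.exp (-(2 * logDigitSum 1 (fun j => a (j + n)) 3)) /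
          Real.exp (logDigitSum 1 a n) ^ 2 := by
        rw [logDigitSum_add, ← Real.exp_nat_mul, ← Real.exp_sub, Nat.cast_two, mul_add,
          neg_add_rev, sub_eq_add_neg]
    _ ≤ 2 * |cfVal (fun j => a (j + n)) - cfVal (fun j => b (j + n))| / (qden a n : ℝ) ^ 2 := by
        gcongr
        exact qden_le_exp_logDigitSum_one a n
    _ = 8 * (|cfVal (fun j => a (j + n)) - cfVal (fun j => b (j + n))| /
          (4 * (qden a n : ℝ) ^ 2)) := by
        ring
    _ ≤ _ := by gcongr

end Distance

section GaussMap

/-- The Gauss map `x ↦ 1 / x mod 1`, which shifts continued fraction expansions. -/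
noncomputable def gaussMap (x : ℝ) : ℝ := Int.fract x⁻¹

/-- The partial quotients of `x` read off its orbit under the Gauss map; `Nat.toPNat'` sends the
digit `0`, which does not occur for `x ∈ Iirr`, to `1`. -/
noncomputable def gaussDigit (x : ℝ) (n : ℕ) : ℕ+ := Nat.toPNat' ⌊(gaussMap^[n] x)⁻¹⌋₊

variable {x : ℝ}

lemma Iirr_subset_Ioo : Iirr ⊆ Set.Ioo 0 1 := fun _ hx =>
  ⟨hx.1.1.lt_of_ne hx.2.ne_zero.symm, hx.1.2.lt_of_ne hx.2.ne_one⟩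

lemma measurable_gaussMap : Measurable gaussMap := measurable_inv.fract

lemma gaussMap_mem_Iirr (hx : x ∈ Iirr) : gaussMap x ∈ Iirr :=
  ⟨⟨Int.fract_nonneg _, (Int.fract_lt_one _).le⟩, hx.2.inv.sub_intCast _⟩

lemma iterate_gaussMap_mem_Iirr (hx : x ∈ Iirr) (n : ℕ) : gaussMap^[n] x ∈ Iirr :=
  Set.MapsTo.iterate (fun _ => gaussMap_mem_Iirr) n hx

lemma floor_inv_add_gaussMap (hx : 0 ≤ x) : (⌊x⁻¹⌋₊ : ℝ) + gaussMap x = x⁻¹ := by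
  rw [natCast_floor_eq_intCast_floor (inv_nonneg.2 hx), gaussMap, Int.floor_add_fract]

lemma floor_inv_pos (hx : x ∈ Set.Ioc 0 1) : 0 < ⌊x⁻¹⌋₊ :=
  Nat.floor_pos.2 ((one_le_inv₀ hx.1).2 hx.2)

lemma coe_gaussDigit (hx : x ∈ Iirr) (n : ℕ) :
    (gaussDigit x n : ℕ) = ⌊(gaussMap^[n] x)⁻¹⌋₊ :=
  PNat.toPNat'_coe
    (floor_inv_pos (Set.Ioo_subset_Ioc_self (Iirr_subset_Ioo (iterate_gaussMap_mem_Iirr hx n))))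

lemma iterate_gaussMap_eq_inv (hx : x ∈ Iirr) (n : ℕ) :
    gaussMap^[n] x = ((gaussDigit x n : ℝ) + gaussMap^[n + 1] x)⁻¹ := by
  rw [Function.iterate_succ_apply', coe_gaussDigit hx n,
    floor_inv_add_gaussMap (Iirr_subset_Ioo (iterate_gaussMap_mem_Iirr hx n)).1.le, inv_inv]

lemma invBranch_gaussDigit (hx : x ∈ Iirr) (n : ℕ) :
    invBranch (gaussDigit x) n (gaussMap^[n] x) = x := by
  induction n with
  | zero => rfl
  | succ n ih => rw [invBranch, ← iterate_gaussMap_eq_inv hx n, ih]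

lemma cfVal_gaussDigit (hx : x ∈ Iirr) : cfVal (gaussDigit x) = x := by
  refine eq_of_abs_sub_nonpos (ge_of_tendsto' (tendsto_inv_qden_sq (gaussDigit x)) fun n => ?_)
  have hy := Iirr_subset_Ioo (iterate_gaussMap_mem_Iirr hx n)
  have hz := cfVal_mem_Icc fun j => gaussDigit x (j + n)
  have hle := abs_invBranch_sub_le (gaussDigit x) n hz.1 hy.1.le
  rw [← cfVal_eq_invBranch, invBranch_gaussDigit hx] at hle
  refine hle.trans ?_
  rw [← one_div]
  gcongr
  exact abs_sub_le_iff.2 ⟨by linarith [hz.2, hy.1], by linarith [hz.1, hy.2]⟩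

lemma coeff_eq_gaussDigit (hx : x ∈ Iirr) : coeff x = gaussDigit x := by
  conv_lhs => rw [← cfVal_gaussDigit hx]
  exact coeff_cfVal _

lemma cfVal_coeff (hx : x ∈ Iirr) : cfVal (coeff x) = x := by
  rw [coeff_eq_gaussDigit hx, cfVal_gaussDigit hx]

lemma iterate_gaussMap_invBranch (a : ℕ → ℕ+) (n : ℕ) {t : ℝ} (ht : t ∈ Set.Ioo 0 1) :
    gaussMap^[n] (invBranch a n t) = t := by
  induction n generalizing t with
  | zero => rfl
  | succ n ih =>
    have hlt : 1 < (a n : ℝ) + t := by linarith [one_le_cast_pnat (a n), ht.1]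
    rw [Function.iterate_succ_apply', invBranch,
      ih ⟨inv_pos.2 (by linarith), inv_lt_one_of_one_lt₀ hlt⟩, gaussMap, inv_inv,
      Int.fract_natCast_add, Int.fract_eq_self.2 ⟨ht.1.le, ht.2⟩]

end GaussMap

section GaussMeasure

/-- The Gauss measure, with density `1 / ((1 + x) log 2)` on `(0, 1]`. -/
noncomputable def gaussMeasure : Measure ℝ :=
  (volume.restrict (Set.Ioc 0 1)).withDensity fun x => ENNReal.ofReal ((1 + x) * Real.log 2)⁻¹

lemma ae_gaussMeasure : ae gaussMeasure = ae (volume.restrict (Set.Ioc (0 : ℝ) 1)) := by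
  refine le_antisymm (withDensity_absolutelyContinuous _ _).ae_le
    (withDensity_absolutelyContinuous' (by fun_prop) ?_).ae_le
  filter_upwards [self_mem_ae_restrict measurableSet_Ioc] with x hx
  have : 0 < 1 + x := by linarith [hx.1]
  exact (ENNReal.ofReal_pos.2 (by positivity)).ne'

lemma ae_gaussMeasure_mem_Ioc : ∀ᵐ x ∂gaussMeasure, x ∈ Set.Ioc (0 : ℝ) 1 := by
  rw [ae_gaussMeasure]
  exact self_mem_ae_restrict measurableSet_Ioc

lemma ae_gaussMeasure_mem_Iirr : ∀ᵐ x ∂gaussMeasure, x ∈ Iirr := by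
  have hirr : ∀ᵐ x : ℝ, Irrational x :=
    measure_eq_zero_iff_ae_notMem.1 ((Set.countable_range ((↑) : ℚ → ℝ)).measure_zero volume)
  have hirr' : ∀ᵐ x ∂gaussMeasure, Irrational x := by
    rw [ae_gaussMeasure]
    exact ae_restrict_of_ae hirr
  filter_upwards [ae_gaussMeasure_mem_Ioc, hirr'] with x hx hxi
  exact ⟨Set.Ioc_subset_Icc_self hx, hxi⟩

lemma hasDerivAt_logb_one_add {x : ℝ} (hx : 0 < 1 + x) :
    HasDerivAt (fun x => Real.logb 2 (1 + x)) ((1 + x) * Real.log 2)⁻¹ x := by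
  have h := (((hasDerivAt_id x).const_add 1).log hx.ne').div_const (Real.log 2)
  rwa [div_div, one_div] at h

lemma gaussMeasure_Ioc {a b : ℝ} (ha : 0 ≤ a) (hab : a ≤ b) (hb : b ≤ 1) :
    gaussMeasure (Set.Ioc a b) = ENNReal.ofReal (Real.logb 2 ((1 + b) / (1 + a))) := by
  have hcont : ContinuousOn (fun x : ℝ => ((1 + x) * Real.log 2)⁻¹) (Set.uIcc a b) := by
    rw [Set.uIcc_of_le hab]
    refine ContinuousOn.inv₀ (by fun_prop) fun x hx => ?_
    have : 0 < 1 + x := by linarith [hx.1]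
    positivity
  have hint := hcont.intervalIntegrable (μ := volume)
  have hnonneg : 0 ≤ᵐ[volume.restrict (Set.Ioc a b)] fun x => ((1 + x) * Real.log 2)⁻¹ := by
    filter_upwards [self_mem_ae_restrict measurableSet_Ioc] with x hx
    have : 0 < 1 + x := by linarith [hx.1]
    simp only [Pi.zero_apply]
    positivity
  rw [gaussMeasure, withDensity_apply _ measurableSet_Ioc,
    Measure.restrict_restrict measurableSet_Ioc, Set.inter_eq_left.2 (Set.Ioc_subset_Ioc ha hb),
    ← ofReal_integral_eq_lintegral_ofReal hint.1 hnonneg, ← intervalIntegral.integral_of_le hab,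
    intervalIntegral.integral_eq_sub_of_hasDerivAt (fun x hx => hasDerivAt_logb_one_add ?_) hint,
    Real.logb_div (by linarith) (by linarith)]
  rw [Set.uIcc_of_le hab] at hx
  linarith [hx.1]

instance : NullSingletonClass gaussMeasure := by
  unfold gaussMeasure
  infer_instance

instance : IsProbabilityMeasure gaussMeasure := ⟨by
  rw [← Measure.measure_inter_eq_of_ae ae_gaussMeasure_mem_Ioc, Set.inter_univ,
    gaussMeasure_Ioc le_rfl zero_le_one le_rfl]
  norm_num⟩

variable {x t : ℝ}

lemma mem_Icc_inv_iff_floor_inv_eq (hx : 0 < x) (ht : t ∈ Set.Ico 0 1) (k : ℕ) :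
    x ∈ Set.Icc (((k : ℝ) + 1 + t)⁻¹) ((k : ℝ) + 1)⁻¹ ↔ ⌊x⁻¹⌋₊ = k + 1 ∧ gaussMap x ≤ t := by
  have hfloor := floor_inv_add_gaussMap hx.le
  have hk : (0 : ℝ) < k + 1 := by positivity
  rw [Set.mem_Icc, inv_le_comm₀ (by linarith [ht.1]) hx, le_inv_comm₀ hx hk]
  refine ⟨fun ⟨hle, hge⟩ => ?_, fun ⟨hk', hle⟩ => ?_⟩
  · have hk' : ⌊x⁻¹⌋₊ = k + 1 := by
      rw [Nat.floor_eq_iff (inv_pos.2 hx).le, Nat.cast_add_one]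
      exact ⟨hge, by linarith [ht.2]⟩
    rw [hk', Nat.cast_add_one] at hfloor
    exact ⟨hk', by linarith⟩
  · rw [hk', Nat.cast_add_one] at hfloor
    have hfract : 0 ≤ gaussMap x := Int.fract_nonneg _
    exact ⟨by linarith, by linarith⟩

lemma gaussMap_preimage_Iic_inter_Ioc (ht : t ∈ Set.Ico 0 1) :
    Set.Ioc 0 1 ∩ gaussMap ⁻¹' Set.Iic t =
      ⋃ k : ℕ, Set.Icc ((k : ℝ) + 1 + t)⁻¹ ((k : ℝ) + 1)⁻¹ := by
  ext x
  simp only [Set.mem_inter_iff, Set.mem_preimage, Set.mem_Iic, Set.mem_iUnion]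
  constructor
  · rintro ⟨hx, hle⟩
    refine ⟨⌊x⁻¹⌋₊ - 1, (mem_Icc_inv_iff_floor_inv_eq hx.1 ht _).2 ⟨?_, hle⟩⟩
    exact (Nat.sub_add_cancel (floor_inv_pos hx)).symm
  · rintro ⟨k, hk⟩
    have hx : 0 < x := (inv_pos.2 (by linarith [ht.1, k.cast_nonneg (α := ℝ)])).trans_le hk.1
    refine ⟨⟨hx, hk.2.trans (inv_le_one_of_one_le₀ (by simp))⟩, ?_⟩
    exact ((mem_Icc_inv_iff_floor_inv_eq hx ht k).1 hk).2

lemma pairwise_disjoint_Icc_inv (ht : t ∈ Set.Ico 0 1) :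
    Pairwise (Function.onFun Disjoint
      fun k : ℕ => Set.Icc ((k : ℝ) + 1 + t)⁻¹ ((k : ℝ) + 1)⁻¹) := by
  refine fun k l hkl => Set.disjoint_left.2 fun x hk hl => hkl ?_
  have hx : 0 < x := (inv_pos.2 (by linarith [ht.1, k.cast_nonneg (α := ℝ)])).trans_le hk.1
  have hfloor := ((mem_Icc_inv_iff_floor_inv_eq hx ht k).1 hk).1
  rw [((mem_Icc_inv_iff_floor_inv_eq hx ht l).1 hl).1] at hfloor
  exact (Nat.succ_injective hfloor).symm

lemma gaussMeasure_Icc_inv (ht : 0 ≤ t) (k : ℕ) :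
    gaussMeasure (Set.Icc ((k : ℝ) + 1 + t)⁻¹ ((k : ℝ) + 1)⁻¹) =
      ENNReal.ofReal
        (Real.logb 2 (1 + t / ((k : ℝ) + 1)) - Real.logb 2 (1 + t / ((k + 1 : ℕ) + 1))) := by
  rw [← measure_congr Ioc_ae_eq_Icc, gaussMeasure_Ioc (by positivity)
    (inv_anti₀ (by positivity) (by linarith)) (inv_le_one_of_one_le₀ (by simp)),
    ← Real.logb_div (by positivity) (by positivity)]
  push_cast
  congr 2
  field_simp
  ring

lemma tendsto_logb_one_add_div (t : ℝ) :
    Tendsto (fun k : ℕ => Real.logb 2 (1 + t / ((k : ℝ) + 1))) atTop (𝓝 0) := by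
  have h := ((tendsto_one_div_add_atTop_nhds_zero_nat (𝕜 := ℝ)).const_mul t).const_add 1
  simp only [mul_one_div, mul_zero, add_zero] at h
  simpa [Real.logb] using (h.log one_ne_zero).div_const (Real.log 2)

lemma logb_one_add_div_succ_le (ht : 0 ≤ t) (k : ℕ) :
    Real.logb 2 (1 + t / ((k + 1 : ℕ) + 1)) ≤ Real.logb 2 (1 + t / ((k : ℝ) + 1)) := by
  refine Real.logb_le_logb_of_le one_lt_two (by positivity) ?_
  gcongr
  exact k.le_succ

lemma hasSum_logb_one_add_div_sub (ht : 0 ≤ t) :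
    HasSum (fun k : ℕ => Real.logb 2 (1 + t / ((k : ℝ) + 1)) -
      Real.logb 2 (1 + t / ((k + 1 : ℕ) + 1))) (Real.logb 2 (1 + t)) := by
  rw [hasSum_iff_tendsto_nat_of_nonneg]
  · simp_rw [sum_range_sub' fun k : ℕ => Real.logb 2 (1 + t / ((k : ℝ) + 1))]
    simpa using (tendsto_logb_one_add_div t).const_sub (Real.logb 2 (1 + t))
  · exact fun k => sub_nonneg.2 (logb_one_add_div_succ_le ht k)

lemma gaussMeasure_preimage_Iic (ht : t ∈ Set.Ico 0 1) :
    gaussMeasure (gaussMap ⁻¹' Set.Iic t) = gaussMeasure (Set.Iic t) := by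
  have hsum := hasSum_logb_one_add_div_sub ht.1
  have hIoc : Set.Ioc 0 1 ∩ Set.Iic t = Set.Ioc 0 t := by
    rw [← Set.Ioi_inter_Iic, Set.inter_assoc, Set.Iic_inter_Iic, min_eq_right ht.2.le,
      Set.Ioi_inter_Iic]
  rw [← Measure.measure_inter_eq_of_ae ae_gaussMeasure_mem_Ioc,
    ← Measure.measure_inter_eq_of_ae (s := Set.Iic t) ae_gaussMeasure_mem_Ioc, hIoc,
    gaussMap_preimage_Iic_inter_Ioc ht,
    measure_iUnion (pairwise_disjoint_Icc_inv ht) fun _ => measurableSet_Icc,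
    gaussMeasure_Ioc le_rfl ht.1 ht.2.le, add_zero, div_one, ← hsum.tsum_eq,
    ENNReal.ofReal_tsum_of_nonneg (fun k => sub_nonneg.2 (logb_one_add_div_succ_le ht.1 k))
      hsum.summable]
  exact tsum_congr fun k => gaussMeasure_Icc_inv ht.1 k

lemma measurePreserving_gaussMap : MeasurePreserving gaussMap gaussMeasure gaussMeasure := by
  refine ⟨measurable_gaussMap, ?_⟩
  have := Measure.isProbabilityMeasure_map (μ := gaussMeasure) measurable_gaussMap.aemeasurable
  refine Measure.ext_of_Iic _ _ fun t => ?_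
  rw [Measure.map_apply measurable_gaussMap measurableSet_Iic]
  by_cases ht : t ∈ Set.Ico 0 1
  · exact gaussMeasure_preimage_Iic ht
  refine measure_congr ?_
  filter_upwards [ae_gaussMeasure_mem_Ioc] with x hx
  have hmap : gaussMap x ∈ Set.Ico 0 1 := ⟨Int.fract_nonneg _, Int.fract_lt_one _⟩
  rw [Set.mem_Ico, not_and, not_lt] at ht
  refine propext (show gaussMap x ≤ t ↔ x ≤ t from ?_)
  rcases lt_or_ge t 0 with h | h
  · exact iff_of_false (h.trans_le hmap.1).not_ge (h.trans hx.1).not_ge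
  · exact iff_of_true (hmap.2.le.trans (ht h)) (hx.2.trans (ht h))

end GaussMeasure

section GaussErgodic

lemma volume_le_mul_volume_image_invBranch (a : ℕ → ℕ+) (n : ℕ) {A : Set ℝ}
    (hA : A ⊆ Set.Ioo 0 1) :
    volume A ≤ ENNReal.ofReal (4 * (qden a n : ℝ) ^ 2) * volume (invBranch a n '' A) := by
  have hq : (0 : ℝ) < qden a n := by exact_mod_cast qden_pos a n
  have hleft : ∀ t ∈ A, gaussMap^[n] (invBranch a n t) = t := fun t ht =>
    iterate_gaussMap_invBranch a n (hA ht)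
  have hlip : LipschitzOnWith (Real.toNNReal (4 * (qden a n : ℝ) ^ 2)) gaussMap^[n]
      (invBranch a n '' A) := by
    refine LipschitzOnWith.of_dist_le_mul ?_
    rintro _ ⟨s, hs, rfl⟩ _ ⟨t, ht, rfl⟩
    have h := le_abs_invBranch_sub a n (Set.Ioo_subset_Icc_self (hA hs))
      (Set.Ioo_subset_Icc_self (hA ht))
    rw [hleft s hs, hleft t ht, Real.dist_eq, Real.dist_eq, Real.coe_toNNReal _ (by positivity)]
    rwa [div_le_iff₀' (by positivity)] at h
  have h := hlip.hausdorffMeasure_image_le zero_le_one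
  rwa [hausdorffMeasure_real, Set.image_image, Set.image_congr hleft, Set.image_id',
    ENNReal.rpow_one] at h

/- The branch of `gaussMap^[n]` around `x` fills `(0, 1)` with bounded distortion, so that it
transports an invariant set into the ball around `x` with at least a fixed proportion. -/
lemma volume_div_eight_le_density {x : ℝ} (hx : x ∈ Iirr) {n : ℕ} {A : Set ℝ}
    (hinv : gaussMap^[n] ⁻¹' A = A) :
    volume (A ∩ Set.Ioo 0 1) / 8 ≤
      volume (A ∩ Metric.closedBall x ((qden (gaussDigit x) n : ℝ) ^ 2)⁻¹) /
        volume (Metric.closedBall x ((qden (gaussDigit x) n : ℝ) ^ 2)⁻¹) := by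
  set a := gaussDigit x
  have hq : (0 : ℝ) < qden a n := by exact_mod_cast qden_pos a n
  have hsub : invBranch a n '' (A ∩ Set.Ioo 0 1) ⊆
      A ∩ Metric.closedBall x ((qden a n : ℝ) ^ 2)⁻¹ := by
    rintro _ ⟨t, ⟨htA, ht⟩, rfl⟩
    refine ⟨?_, ?_⟩
    · rwa [← hinv, Set.mem_preimage, iterate_gaussMap_invBranch a n ht]
    · have hy := Iirr_subset_Ioo (iterate_gaussMap_mem_Iirr hx n)
      have hle := abs_invBranch_sub_le a n ht.1.le hy.1.le
      rw [invBranch_gaussDigit hx] at hle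
      rw [Metric.mem_closedBall, Real.dist_eq, ← one_div]
      refine hle.trans ?_
      gcongr
      exact abs_sub_le_iff.2 ⟨by linarith [ht.2, hy.1], by linarith [ht.1, hy.2]⟩
  have hball : volume (Metric.closedBall x ((qden a n : ℝ) ^ 2)⁻¹) =
      8 / ENNReal.ofReal (4 * (qden a n : ℝ) ^ 2) := by
    rw [Real.volume_closedBall, ← ENNReal.ofReal_ofNat, ← ENNReal.ofReal_div_of_pos (by positivity)]
    congr 1
    field_simp
    norm_num
  have hc : ENNReal.ofReal (4 * (qden a n : ℝ) ^ 2) ≠ 0 :=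
    (ENNReal.ofReal_pos.2 (by positivity)).ne'
  have hle := (volume_le_mul_volume_image_invBranch a n Set.inter_subset_right).trans
    (mul_le_mul_right (measure_mono hsub) _)
  rw [hball, ← ENNReal.div_mul _ (Or.inr hc) (Or.inr ENNReal.ofReal_ne_top), mul_comm,
    ← mul_div_assoc]
  exact ENNReal.div_le_div_right hle 8

lemma ae_tendsto_density_closedBall {A : Set ℝ} (hA : MeasurableSet A) :
    ∀ᵐ x, ∀ δ : ℕ → ℝ, Tendsto δ atTop (𝓝[>] 0) →
      Tendsto (fun n => volume (A ∩ Metric.closedBall x (δ n)) /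
        volume (Metric.closedBall x (δ n))) atTop (𝓝 (A.indicator 1 x)) := by
  filter_upwards [(IsUnifLocDoublingMeasure.vitaliFamily (volume : Measure ℝ)
    1).ae_tendsto_measure_inter_div_of_measurableSet hA] with x hx δ hδ
  refine hx.comp (IsUnifLocDoublingMeasure.tendsto_closedBall_filterAt volume (fun _ => x) δ hδ ?_)
  filter_upwards [hδ.eventually self_mem_nhdsWithin] with n hn
  rw [one_mul]
  exact Metric.mem_closedBall_self (le_of_lt hn)

lemma ae_mem_of_iterate_gaussMap_preimage_eq {d : ℕ} (hd : d ≠ 0) {A : Set ℝ}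
    (hA : MeasurableSet A) (hinv : gaussMap^[d] ⁻¹' A = A) (hpos : volume (A ∩ Set.Ioo 0 1) ≠ 0) :
    ∀ᵐ x, x ∈ Iirr → x ∈ A := by
  filter_upwards [ae_tendsto_density_closedBall hA] with x hdensity hx
  by_contra hxA
  have hinv' (n : ℕ) : gaussMap^[d * n] ⁻¹' A = A := by
    rw [Function.iterate_mul]
    exact Function.IsFixedPt.preimage_iterate hinv n
  have hpos_radius (n : ℕ) : 0 < ((qden (gaussDigit x) (d * n) : ℝ) ^ 2)⁻¹ :=
    inv_pos.2 (pow_pos (by exact_mod_cast qden_pos _ _) 2)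
  have hradius : Tendsto (fun n => ((qden (gaussDigit x) (d * n) : ℝ) ^ 2)⁻¹) atTop (𝓝[>] 0) :=
    tendsto_nhdsWithin_iff.2 ⟨(tendsto_inv_qden_sq _).comp
      (tendsto_id.const_mul_atTop' (Nat.pos_of_ne_zero hd)), .of_forall hpos_radius⟩
  have hle := ge_of_tendsto' (hdensity _ hradius) fun n => volume_div_eight_le_density hx (hinv' n)
  rw [Set.indicator_of_notMem hxA, nonpos_iff_eq_zero, ENNReal.div_eq_zero_iff] at hle
  exact hle.elim hpos (by norm_num)

lemma ergodic_iterate_gaussMap {d : ℕ} (hd : d ≠ 0) : Ergodic gaussMap^[d] gaussMeasure := by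
  refine ⟨measurePreserving_gaussMap.iterate d, ⟨fun A hA hinv => eventuallyConst_set.2 ?_⟩⟩
  have ae_of_volume {p : ℝ → Prop} (hp : ∀ᵐ x, p x) : ∀ᵐ x ∂gaussMeasure, p x := by
    rw [ae_gaussMeasure]
    exact ae_restrict_of_ae hp
  by_cases hpos : volume (A ∩ Set.Ioo 0 1) = 0
  · right
    filter_upwards [ae_of_volume (measure_eq_zero_iff_ae_notMem.1 hpos),
      ae_gaussMeasure_mem_Iirr] with x hx hxI hxA
    exact hx ⟨hxA, Iirr_subset_Ioo hxI⟩
  · left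
    filter_upwards [ae_of_volume (ae_mem_of_iterate_gaussMap_preimage_eq hd hA hinv hpos),
      ae_gaussMeasure_mem_Iirr] with x hx hxI
    exact hx hxI

end GaussErgodic

section Birkhoff

variable {X : Type*} {T : X → X} {f : X → ℝ}

/-- The maximal function `x ↦ max_{1 ≤ k ≤ n + 1} birkhoffSum T f k x` of the maximal ergodic
theorem, in the recursive form on which its proof relies. -/
noncomputable def maxBirkhoffSum (T : X → X) (f : X → ℝ) : ℕ → X → ℝ
  | 0, x => f x
  | n + 1, x => f x + (maxBirkhoffSum T f n (T x))⁺

lemma maxBirkhoffSum_le_succ (T : X → X) (f : X → ℝ) (n : ℕ) (x : X) :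
    maxBirkhoffSum T f n x ≤ maxBirkhoffSum T f (n + 1) x := by
  induction n generalizing x with
  | zero => exact le_add_of_nonneg_right (posPart_nonneg _)
  | succ n ih => exact add_le_add_right (posPart_mono (ih (T x))) _

lemma monotone_maxBirkhoffSum (T : X → X) (f : X → ℝ) (x : X) :
    Monotone fun n => maxBirkhoffSum T f n x :=
  monotone_nat_of_le_succ fun n => maxBirkhoffSum_le_succ T f n x

lemma birkhoffSum_succ_le_maxBirkhoffSum (T : X → X) (f : X → ℝ) (n : ℕ) (x : X) :
    birkhoffSum T f (n + 1) x ≤ maxBirkhoffSum T f n x := by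
  induction n generalizing x with
  | zero => simp [maxBirkhoffSum]
  | succ n ih =>
    rw [birkhoffSum_succ', maxBirkhoffSum]
    exact add_le_add_right ((ih (T x)).trans (le_posPart _)) _

lemma bddAbove_birkhoffSum_apply_iff (T : X → X) (f : X → ℝ) (x : X) :
    BddAbove (Set.range fun n => birkhoffSum T f n (T x)) ↔
      BddAbove (Set.range fun n => birkhoffSum T f n x) := by
  constructor
  · rintro ⟨c, hc⟩
    refine ⟨max 0 (f x + c), ?_⟩
    rintro _ ⟨n | n, rfl⟩
    · simp
    · simp only [birkhoffSum_succ']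
      exact le_max_of_le_right (add_le_add_right (hc ⟨n, rfl⟩) _)
  · rintro ⟨c, hc⟩
    refine ⟨c - f x, ?_⟩
    rintro _ ⟨n, rfl⟩
    have hn := hc ⟨n + 1, rfl⟩
    simp only [birkhoffSum_succ'] at hn
    exact le_sub_iff_add_le'.2 hn

lemma exists_maxBirkhoffSum_nonneg {x : X}
    (hx : ¬ BddAbove (Set.range fun n => birkhoffSum T f n x)) :
    ∃ n, 0 ≤ maxBirkhoffSum T f n x := by
  by_contra! hneg
  refine hx ⟨0, ?_⟩
  rintro _ ⟨n | n, rfl⟩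
  · simp
  · exact (birkhoffSum_succ_le_maxBirkhoffSum T f n x).trans (hneg n).le

variable [MeasurableSpace X] {μ : Measure X}

lemma integrable_maxBirkhoffSum (hT : MeasurePreserving T μ μ) (hf : Integrable f μ) (n : ℕ) :
    Integrable (maxBirkhoffSum T f n) μ := by
  induction n with
  | zero => exact hf
  | succ n ih => exact hf.add (hT.integrable_comp_of_integrable ih.pos_part)

lemma integral_add_integral_negPart_maxBirkhoffSum_nonneg (hT : MeasurePreserving T μ μ)
    (hf : Integrable f μ) (n : ℕ) :
    0 ≤ ∫ x, f x ∂μ + ∫ x, (maxBirkhoffSum T f n x)⁻ ∂μ := by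
  have hF := integrable_maxBirkhoffSum hT hf
  have hpos : Integrable (fun x => (maxBirkhoffSum T f n x)⁺) μ := (hF n).pos_part
  have hneg : Integrable (fun x => (maxBirkhoffSum T f n x)⁻) μ := (hF n).neg_part
  have hcomp : ∫ x, (maxBirkhoffSum T f n (T x))⁺ ∂μ = ∫ x, (maxBirkhoffSum T f n x)⁺ ∂μ := by
    conv_rhs => rw [← hT.map_eq]
    refine Eq.symm (integral_map hT.aemeasurable ?_)
    rw [hT.map_eq]
    exact hpos.aestronglyMeasurable
  have hsub : ∫ x, maxBirkhoffSum T f n x ∂μ =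
      ∫ x, (maxBirkhoffSum T f n x)⁺ ∂μ - ∫ x, (maxBirkhoffSum T f n x)⁻ ∂μ := by
    simpa only [posPart_sub_negPart] using integral_sub hpos hneg
  have hsucc : ∫ x, maxBirkhoffSum T f (n + 1) x ∂μ =
      ∫ x, f x ∂μ + ∫ x, (maxBirkhoffSum T f n x)⁺ ∂μ := by
    rw [← hcomp]
    exact integral_add hf (hT.integrable_comp_of_integrable hpos)
  have hle := integral_mono (hF n) (hF (n + 1)) (maxBirkhoffSum_le_succ T f n)
  linarith

lemma tendsto_integral_negPart_maxBirkhoffSum (hT : MeasurePreserving T μ μ)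
    (hf : Integrable f μ)
    (hx : ∀ᵐ x ∂μ, ¬ BddAbove (Set.range fun n => birkhoffSum T f n x)) :
    Tendsto (fun n => ∫ x, (maxBirkhoffSum T f n x)⁻ ∂μ) atTop (𝓝 0) := by
  rw [← integral_zero X ℝ (μ := μ)]
  refine tendsto_integral_of_dominated_convergence (fun x => (f x)⁻)
    (fun n => (integrable_maxBirkhoffSum hT hf n).neg_part.aestronglyMeasurable) hf.neg_part
    (fun n => .of_forall fun x => ?_) ?_
  · rw [Real.norm_of_nonneg (negPart_nonneg _)]
    exact negPart_anti (monotone_maxBirkhoffSum T f x n.zero_le)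
  · filter_upwards [hx] with x hx
    obtain ⟨N, hN⟩ := exists_maxBirkhoffSum_nonneg hx
    refine tendsto_const_nhds.congr' ?_
    filter_upwards [eventually_ge_atTop N] with n hn
    exact (negPart_eq_zero.2 (hN.trans (monotone_maxBirkhoffSum T f x hn))).symm

lemma ae_bddAbove_birkhoffSum (hT : Ergodic T μ) (hfm : Measurable f) (hf : Integrable f μ)
    (hneg : ∫ x, f x ∂μ < 0) : ∀ᵐ x ∂μ, BddAbove (Set.range fun n => birkhoffSum T f n x) := by
  have hmeas : MeasurableSet {x | BddAbove (Set.range fun n => birkhoffSum T f n x)} :=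
    measurableSet_bddAbove_range fun n => Finset.measurable_sum _ fun i _ =>
      hfm.comp (hT.measurable.iterate i)
  refine (hT.toPreErgodic.ae_mem_or_ae_notMem hmeas
    (Set.ext (bddAbove_birkhoffSum_apply_iff T f))).resolve_right fun hx => hneg.not_ge ?_
  have hlim := (tendsto_integral_negPart_maxBirkhoffSum hT.toMeasurePreserving hf hx).const_add
    (∫ x, f x ∂μ)
  rw [add_zero] at hlim
  exact ge_of_tendsto' hlim
    (integral_add_integral_negPart_maxBirkhoffSum_nonneg hT.toMeasurePreserving hf)

variable [IsProbabilityMeasure μ]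

lemma ae_eventually_birkhoffAverage_lt (hT : Ergodic T μ) (hf : Integrable f μ) {c : ℝ}
    (hc : ∫ x, f x ∂μ < c) : ∀ᵐ x ∂μ, ∀ᶠ n in atTop, birkhoffAverage ℝ T f n x < c := by
  obtain ⟨b, hfb, hbc⟩ := exists_between hc
  set g := hf.1.mk f
  have hg : Integrable g μ := hf.congr hf.1.ae_eq_mk
  have hgb : ∫ x, g x - b ∂μ < 0 := by
    rw [integral_sub hg (integrable_const b), ← integral_congr_ae hf.1.ae_eq_mk]
    simpa using hfb
  filter_upwards [ae_bddAbove_birkhoffSum hT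
      (hf.1.stronglyMeasurable_mk.measurable.sub_const b) (hg.sub (integrable_const b)) hgb,
    ae_all_iff.2 fun n =>
      hT.quasiMeasurePreserving.birkhoffAverage_ae_eq_of_ae_eq ℝ hf.1.ae_eq_mk n]
    with x ⟨B, hB⟩ hfg
  have hlim : Tendsto (fun n : ℕ => b + B / n) atTop (𝓝 b) := by
    simpa using (tendsto_const_div_atTop_nhds_zero_nat B).const_add b
  filter_upwards [hlim.eventually_lt_const hbc, eventually_gt_atTop 0] with n hn hn0
  refine lt_of_le_of_lt ?_ hn
  have hle : birkhoffSum T g n x - n * b ≤ B := by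
    simpa [birkhoffSum] using hB ⟨n, rfl⟩
  have hn0 : (0 : ℝ) < n := by exact_mod_cast hn0
  rw [hfg n, birkhoffAverage, smul_eq_mul, inv_mul_le_iff₀ hn0, mul_add, mul_div_cancel₀ _ hn0.ne']
  linarith

theorem ae_tendsto_birkhoffAverage_of_ergodic (hT : Ergodic T μ) (hf : Integrable f μ) :
    ∀ᵐ x ∂μ, Tendsto (fun n => birkhoffAverage ℝ T f n x) atTop (𝓝 (∫ x, f x ∂μ)) := by
  have hupper (q : ℚ) : ∀ᵐ x ∂μ, ∫ x, f x ∂μ < q →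
      ∀ᶠ n in atTop, birkhoffAverage ℝ T f n x < q :=
    eventually_imp_distrib_left.2 (ae_eventually_birkhoffAverage_lt hT hf)
  have hlower (q : ℚ) : ∀ᵐ x ∂μ, q < ∫ x, f x ∂μ →
      ∀ᶠ n in atTop, q < birkhoffAverage ℝ T f n x := by
    refine eventually_imp_distrib_left.2 fun hq => ?_
    have hneg : ∫ x, (-f) x ∂μ < -q := by
      simpa only [Pi.neg_apply, integral_neg, neg_lt_neg_iff] using hq
    filter_upwards [ae_eventually_birkhoffAverage_lt hT hf.neg hneg] with x hx
    simpa only [birkhoffAverage_neg, Pi.neg_apply, neg_lt_neg_iff] using hx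
  filter_upwards [ae_all_iff.2 hupper, ae_all_iff.2 hlower] with x hx hx'
  refine tendsto_order.2 ⟨fun a ha => ?_, fun a ha => ?_⟩
  · obtain ⟨q, haq, hq⟩ := exists_rat_btwn ha
    exact (hx' q hq).mono fun n hn => haq.trans hn
  · obtain ⟨q, hq, hqa⟩ := exists_rat_btwn ha
    exact (hx q hq).mono fun n hn => hn.trans hqa

end Birkhoff

section DigitLaw

/-- The Gauss–Kuzmin probability that the first partial quotient equals `j + 1`. -/
noncomputable def gaussKuzmin (j : ℕ) : ℝ := Real.logb 2 (1 + 1 / (((j : ℝ) + 1) * ((j : ℝ) + 3)))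

lemma gaussKuzmin_pos (j : ℕ) : 0 < gaussKuzmin j :=
  Real.logb_pos one_lt_two (lt_add_of_pos_right 1 (by positivity))

lemma gaussKuzmin_le (j : ℕ) : gaussKuzmin j ≤ (Real.log 2)⁻¹ * (((j : ℝ) + 1) ^ 2)⁻¹ := by
  rw [gaussKuzmin, Real.logb, div_eq_inv_mul]
  gcongr
  refine (Real.log_le_sub_one_of_pos (by positivity)).trans ?_
  rw [add_sub_cancel_left, one_div, sq]
  gcongr
  norm_num

lemma log_add_one_add_natCast_nonneg (j k : ℕ) : 0 ≤ Real.log ((j : ℝ) + 1 + k) :=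
  Real.log_nonneg (by linarith [j.cast_nonneg (α := ℝ), k.cast_nonneg (α := ℝ)])

lemma log_add_one_add_natCast_le (j k : ℕ) :
    Real.log ((j : ℝ) + 1 + k) ≤
      2 * ((k : ℝ) + 1) ^ (1 / 2 : ℝ) * ((j : ℝ) + 1) ^ (1 / 2 : ℝ) := by
  calc Real.log ((j : ℝ) + 1 + k) ≤ Real.log (((k : ℝ) + 1) * ((j : ℝ) + 1)) :=
        Real.log_le_log (by positivity)
          (by linarith [mul_nonneg (k.cast_nonneg (α := ℝ)) (j.cast_nonneg (α := ℝ))])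
    _ ≤ (((k : ℝ) + 1) * ((j : ℝ) + 1)) ^ (1 / 2 : ℝ) / (1 / 2) :=
        Real.log_le_rpow_div (by positivity) (by norm_num)
    _ = _ := by
        rw [Real.mul_rpow (by positivity) (by positivity)]
        ring

lemma summable_gaussKuzmin_mul_log (k : ℕ) :
    Summable fun j : ℕ => gaussKuzmin j * Real.log ((j : ℝ) + 1 + k) := by
  have hsum : Summable fun j : ℕ => ((j + 1 : ℕ) : ℝ) ^ (-(3 / 2) : ℝ) :=
    (summable_nat_add_iff 1).2 (Real.summable_nat_rpow.2 (by norm_num))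
  refine Summable.of_nonneg_of_le
    (fun j => mul_nonneg (gaussKuzmin_pos j).le (log_add_one_add_natCast_nonneg j k)) (fun j => ?_)
    (hsum.mul_left ((Real.log 2)⁻¹ * (2 * ((k : ℝ) + 1) ^ (1 / 2 : ℝ))))
  refine (mul_le_mul (gaussKuzmin_le j) (log_add_one_add_natCast_le j k)
    (log_add_one_add_natCast_nonneg j k) (by positivity)).trans_eq ?_
  have hj : (0 : ℝ) < (j : ℝ) + 1 := by positivity
  have hpow : ((j + 1 : ℕ) : ℝ) ^ (-(3 / 2) : ℝ) =
      (((j : ℝ) + 1) ^ 2)⁻¹ * ((j : ℝ) + 1) ^ (1 / 2 : ℝ) := by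
    rw [← Real.rpow_natCast, ← Real.rpow_neg hj.le, ← Real.rpow_add hj]
    norm_num
  rw [hpow]
  ring

lemma log_Kconst (k : ℕ) :
    Real.log (Kconst k) = ∑' j : ℕ, gaussKuzmin j * Real.log ((j : ℝ) + 1 + k) := by
  have hpos (j : ℕ) : (0 : ℝ) < 1 + 1 / (((j : ℝ) + 1) * ((j : ℝ) + 3)) := by positivity
  have hlog (j : ℕ) : Real.log ((1 + 1 / (((j : ℝ) + 1) * ((j : ℝ) + 3))) ^
      (Real.log ((j : ℝ) + 1 + k) / Real.log 2)) =
        gaussKuzmin j * Real.log ((j : ℝ) + 1 + k) := by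
    rw [Real.log_rpow (hpos j), gaussKuzmin, Real.logb]
    ring
  have hsum := summable_gaussKuzmin_mul_log k
  simp only [← hlog] at hsum ⊢
  rw [Kconst, ← Real.rexp_tsum_eq_tprod (fun j => Real.rpow_pos_of_pos (hpos j) _) hsum,
    Real.log_exp]

lemma log_Kconst_zero_pos : 0 < Real.log (Kconst 0) := by
  rw [log_Kconst]
  refine (summable_gaussKuzmin_mul_log 0).tsum_pos
    (fun j => mul_nonneg (gaussKuzmin_pos j).le (log_add_one_add_natCast_nonneg j 0)) 1
    (mul_pos (gaussKuzmin_pos 1) (Real.log_pos ?_))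
  norm_num

lemma monotone_log_Kconst : Monotone fun k => Real.log (Kconst k) := by
  intro k l hkl
  simp only [log_Kconst]
  refine (summable_gaussKuzmin_mul_log k).tsum_le_tsum (fun j => ?_)
    (summable_gaussKuzmin_mul_log l)
  have := (gaussKuzmin_pos j).le
  gcongr

lemma mem_Ioc_and_floor_inv_eq_iff {x : ℝ} (j : ℕ) :
    x ∈ Set.Ioc 0 1 ∧ ⌊x⁻¹⌋₊ = j + 1 ↔ x ∈ Set.Ioc ((j : ℝ) + 2)⁻¹ ((j : ℝ) + 1)⁻¹ := by
  have hj : (1 : ℝ) ≤ (j : ℝ) + 1 := le_add_of_nonneg_left j.cast_nonneg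
  suffices h : 0 < x → (⌊x⁻¹⌋₊ = j + 1 ↔ x ∈ Set.Ioc ((j : ℝ) + 2)⁻¹ ((j : ℝ) + 1)⁻¹) by
    refine ⟨fun hx => (h hx.1.1).1 hx.2, fun hx => ?_⟩
    have hx₀ : 0 < x := (inv_pos.2 (by positivity)).trans hx.1
    exact ⟨⟨hx₀, hx.2.trans (inv_le_one_of_one_le₀ hj)⟩, (h hx₀).2 hx⟩
  intro hx
  rw [Nat.floor_eq_iff (inv_pos.2 hx).le, Set.mem_Ioc, le_inv_comm₀ hx (by positivity),
    inv_lt_comm₀ (by positivity) hx, and_comm]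
  push_cast
  rw [add_assoc (j : ℝ), one_add_one_eq_two]

lemma gaussMeasure_floor_inv_eq_succ (j : ℕ) :
    gaussMeasure {x | ⌊x⁻¹⌋₊ = j + 1} = ENNReal.ofReal (gaussKuzmin j) := by
  have hae : ({x | ⌊x⁻¹⌋₊ = j + 1} : Set ℝ) =ᵐ[gaussMeasure]
      Set.Ioc ((j : ℝ) + 2)⁻¹ ((j : ℝ) + 1)⁻¹ := by
    filter_upwards [ae_gaussMeasure_mem_Ioc] with x hx
    exact propext ((and_iff_right hx).symm.trans (mem_Ioc_and_floor_inv_eq_iff j))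
  rw [measure_congr hae, gaussMeasure_Ioc (by positivity)
    (inv_anti₀ (by positivity) (by linarith)) (inv_le_one_of_one_le₀ (by simp)), gaussKuzmin]
  congr 2
  field_simp
  ring

lemma gaussMeasure_floor_inv_eq_zero : gaussMeasure {x | ⌊x⁻¹⌋₊ = 0} = 0 := by
  rw [measure_eq_zero_iff_ae_notMem]
  filter_upwards [ae_gaussMeasure_mem_Ioc] with x hx
  exact (floor_inv_pos hx).ne'

lemma measurable_floor_inv : Measurable fun x : ℝ => ⌊x⁻¹⌋₊ :=
  Nat.measurable_floor.comp measurable_inv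

lemma map_floor_inv_gaussMeasure :
    gaussMeasure.map (fun x => ⌊x⁻¹⌋₊) =
      Measure.sum fun j => ENNReal.ofReal (gaussKuzmin j) • Measure.dirac (j + 1) := by
  refine Measure.ext_of_singleton fun n => ?_
  rw [Measure.map_apply measurable_floor_inv (measurableSet_singleton n),
    Measure.sum_apply _ (measurableSet_singleton n)]
  cases n with
  | zero => exact gaussMeasure_floor_inv_eq_zero.trans (by simp)
  | succ n =>
    rw [tsum_eq_single n fun j hj => by simp [hj]]
    simpa using! gaussMeasure_floor_inv_eq_succ n

lemma integrable_log_floor_inv_add (k : ℕ) :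
    Integrable (fun x => Real.log ((⌊x⁻¹⌋₊ : ℝ) + k)) gaussMeasure := by
  refine Integrable.comp_measurable (g := fun m : ℕ => Real.log ((m : ℝ) + k)) ?_
    measurable_floor_inv
  rw [map_floor_inv_gaussMeasure]
  refine integrable_sum_dirac (fun _ => ENNReal.ofReal_ne_top) ?_
  refine (summable_gaussKuzmin_mul_log k).congr fun j => ?_
  rw [ENNReal.toReal_ofReal (gaussKuzmin_pos j).le, Nat.cast_succ,
    Real.norm_of_nonneg (log_add_one_add_natCast_nonneg j k)]

lemma integral_log_floor_inv_add (k : ℕ) :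
    ∫ x, Real.log ((⌊x⁻¹⌋₊ : ℝ) + k) ∂gaussMeasure = Real.log (Kconst k) := by
  rw [← integral_map (f := fun m : ℕ => Real.log ((m : ℝ) + k))
    measurable_floor_inv.aemeasurable
    measurable_from_top.aestronglyMeasurable, map_floor_inv_gaussMeasure,
    integral_sum_dirac fun _ => ENNReal.ofReal_ne_top, log_Kconst]
  refine tsum_congr fun j => ?_
  rw [ENNReal.toReal_ofReal (gaussKuzmin_pos j).le, Nat.cast_succ, smul_eq_mul]

end DigitLaw

section KhinchinTypical

/-- A digit sequence is *Khinchin typical* if, for every `k`, the geometric mean of its first `n`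
digits shifted by `k` converges to `Kconst k`; the condition is recorded in logarithmic form. -/
def IsKhinchinTypical (u : ℕ → ℕ+) : Prop :=
  ∀ k : ℕ, Tendsto (fun n : ℕ => logDigitSum k u n / n) atTop (𝓝 (Real.log (Kconst k)))

lemma ae_isKhinchinTypical_gaussDigit_mul {d : ℕ} (hd : d ≠ 0) :
    ∀ᵐ x ∂gaussMeasure, IsKhinchinTypical fun j => gaussDigit x (d * j) := by
  have hae (k : ℕ) := ae_tendsto_birkhoffAverage_of_ergodic (ergodic_iterate_gaussMap hd)
    (integrable_log_floor_inv_add k)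
  filter_upwards [ae_all_iff.2 hae, ae_gaussMeasure_mem_Iirr] with x hx hxI k
  rw [← integral_log_floor_inv_add]
  refine (hx k).congr fun n => ?_
  rw [birkhoffAverage, birkhoffSum, smul_eq_mul, inv_mul_eq_div, logDigitSum]
  simp only [coe_gaussDigit hxI, Function.iterate_mul]

lemma ae_isKhinchinTypical_gaussDigit {d : ℕ} (hd : d ≠ 0) (e : ℕ) :
    ∀ᵐ x ∂gaussMeasure, IsKhinchinTypical fun j => gaussDigit x (d * j + e) := by
  filter_upwards [(measurePreserving_gaussMap.iterate e).quasiMeasurePreserving.ae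
    (ae_isKhinchinTypical_gaussDigit_mul hd)] with x hx
  simpa only [gaussDigit, ← Function.iterate_add_apply] using hx

end KhinchinTypical

section LinearGrowth

variable {s : ℕ → ℝ} {l : ℝ}

lemma tendsto_comp_mul_add_div (h : Tendsto (fun n => s n / n) atTop (𝓝 l)) {d : ℕ} (hd : d ≠ 0)
    (c : ℕ) : Tendsto (fun n : ℕ => s (d * n + c) / n) atTop (𝓝 (d * l)) := by
  have hindex : Tendsto (fun n => d * n + c) atTop atTop :=
    tendsto_atTop_mono (fun n => Nat.le_add_right (d * n) c)
      (tendsto_id.const_mul_atTop' (Nat.pos_of_ne_zero hd))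
  have hratio : Tendsto (fun n : ℕ => (d : ℝ) + c / n) atTop (𝓝 d) := by
    simpa using (tendsto_const_div_atTop_nhds_zero_nat (c : ℝ)).const_add (d : ℝ)
  refine (hratio.mul (h.comp hindex)).congr' ?_
  filter_upwards [eventually_gt_atTop 0] with n hn
  have : (0 : ℝ) < d * n + c := by positivity
  simp only [Function.comp_apply]
  push_cast
  field_simp

lemma bddAbove_range_of_tendsto_div (h : Tendsto (fun n => s n / n) atTop (𝓝 l)) (hl : l < 0) :
    BddAbove (Set.range s) := by
  refine IsBoundedUnder.bddAbove_range (isBoundedUnder_of_eventually_le (a := 0) ?_)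
  filter_upwards [h.eventually_lt_const hl] with n hn
  exact (neg_of_div_neg_left hn n.cast_nonneg).le

lemma nonpos_of_tendsto_div_of_bddAbove (h : Tendsto (fun n => s n / n) atTop (𝓝 l))
    (hs : BddAbove (Set.range s)) : l ≤ 0 := by
  obtain ⟨C, hC⟩ := hs
  exact le_of_tendsto_of_tendsto' h (tendsto_const_div_atTop_nhds_zero_nat C) fun n =>
    div_le_div_of_nonneg_right (hC ⟨n, rfl⟩) n.cast_nonneg

lemma IsKhinchinTypical.tendsto_logDigitSum_mul_add {u : ℕ → ℕ+} (hu : IsKhinchinTypical u)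
    (k : ℕ) {d : ℕ} (hd : d ≠ 0) (c : ℕ) :
    Tendsto (fun n : ℕ => logDigitSum k u (d * n + c) / n) atTop
      (𝓝 (d * Real.log (Kconst k))) :=
  tendsto_comp_mul_add_div (hu k) hd c

end LinearGrowth

section Decimation

/-- The map `[a₁, a₂, …] ↦ [a_{e+1}, a_{d+e+1}, a_{2d+e+1}, …]` keeping one partial quotient out of
`d`; the components of Cantor's bijection are the cases `d = 2` and `e = 0, 1`. -/
noncomputable def cfDecimate (d e : ℕ) (x : ℝ) : ℝ := cfVal fun j => coeff x (d * j + e)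

lemma cfDecimate_cfVal (d e : ℕ) (a : ℕ → ℕ+) :
    cfDecimate d e (cfVal a) = cfVal fun j => a (d * j + e) := by
  rw [cfDecimate, coeff_cfVal]

variable {d e : ℕ} {a : ℕ → ℕ+} {α : ℝ}

/- If `a` and `b` first differ at `n`, then `|cfVal a - cfVal b|` is governed by the digits of `a`
up to `n`, while the decimated sequences agree on roughly the first `n / d` digits. -/
lemma memHolder_cfDecimate (hd : d ≠ 0) (hα : 0 ≤ α)
    (hbdd : BddAbove (Set.range fun m : ℕ => 2 * α * logDigitSum 1 a (d * m + (d + e + 3)) -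
      2 * logDigitSum 0 (fun j => a (d * j + e)) m)) :
    memHolder (cfDecimate d e) Iirr (cfVal a) α := by
  obtain ⟨c, hc⟩ := hbdd
  refine ⟨Real.exp c * 8 ^ α, by positivity, fun y hy => ?_⟩
  obtain ⟨b, rfl⟩ : ∃ b, cfVal b = y := ⟨coeff y, cfVal_coeff hy⟩
  rw [cfDecimate_cfVal, cfDecimate_cfVal]
  rcases eq_or_ne a b with rfl | hab
  · rw [sub_self, sub_self, abs_zero]
    positivity
  set n := PiNat.firstDiff a b
  set m := (n - e) / d
  have hn : n + 3 ≤ d * m + (d + e + 3) := by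
    have := Nat.lt_mul_div_succ (n - e) (Nat.pos_of_ne_zero hd)
    rw [mul_add_one] at this
    lia
  have hm : ∀ i < m, a (d * i + e) = b (d * i + e) := by
    intro i hi
    apply PiNat.apply_eq_of_lt_firstDiff
    have := (Nat.mul_le_mul_left d (Nat.succ_le_of_lt hi)).trans (Nat.mul_div_le (n - e) d)
    rw [Nat.mul_succ] at this
    lia
  have hsep := exp_neg_logDigitSum_le_abs_cfVal_sub
    (fun i hi => PiNat.apply_eq_of_lt_firstDiff hi) (PiNat.apply_firstDiff_ne hab)
  calc |cfVal (fun j => a (d * j + e)) - cfVal (fun j => b (d * j + e))|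
      ≤ Real.exp (-(2 * logDigitSum 0 (fun j => a (d * j + e)) m)) := abs_cfVal_sub_le_of_agree hm
    _ ≤ Real.exp (c + -(2 * logDigitSum 1 a (n + 3)) * α) := by
        have := mul_le_mul_of_nonneg_left (monotone_logDigitSum a 1 hn) hα
        have := hc ⟨m, rfl⟩
        gcongr
        linarith
    _ = Real.exp c * Real.exp (-(2 * logDigitSum 1 a (n + 3))) ^ α := by
        rw [Real.exp_add, Real.exp_mul]
    _ ≤ Real.exp c * (8 * |cfVal a - cfVal b|) ^ α := by gcongr
    _ = _ := by rw [Real.mul_rpow (by norm_num) (abs_nonneg _), mul_assoc]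

/- Changing only the digit `d * m + e` moves `cfVal a` very little, but changes the `m`-th digit of
the decimated sequence. -/
lemma bddAbove_of_memHolder_cfDecimate (hd : d ≠ 0) (hα : 0 ≤ α)
    (h : memHolder (cfDecimate d e) Iirr (cfVal a) α) :
    BddAbove (Set.range fun m : ℕ => 2 * α * logDigitSum 0 a (d * m + e) -
      2 * logDigitSum 1 (fun j => a (d * j + e)) (m + 3)) := by
  obtain ⟨C, hC, hle⟩ := h
  refine ⟨Real.log (8 * C), ?_⟩
  rintro _ ⟨m, rfl⟩
  set b := Function.update a (d * m + e) (a (d * m + e) + 1) with hb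
  have hne : a (d * m + e) ≠ b (d * m + e) := by
    rw [hb, Function.update_self]
    exact (PNat.lt_add_right _ 1).ne
  have hagree {i : ℕ} (hi : i ≠ d * m + e) : a i = b i := (Function.update_of_ne hi _ _).symm
  have hdec : ∀ i < m, a (d * i + e) = b (d * i + e) := fun i hi =>
    hagree (by simpa [hd] using hi.ne)
  have hholder := hle (cfVal b) (cfVal_mem_Iirr b)
  rw [cfDecimate_cfVal, cfDecimate_cfVal] at hholder
  have hexp : Real.exp (-(2 * logDigitSum 1 (fun j => a (d * j + e)) (m + 3))) ≤
      8 * C * Real.exp (-(2 * logDigitSum 0 a (d * m + e)) * α) := by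
    calc _ ≤ 8 * |cfVal (fun j => a (d * j + e)) - cfVal fun j => b (d * j + e)| :=
          exp_neg_logDigitSum_le_abs_cfVal_sub hdec hne
      _ ≤ 8 * (C * |cfVal a - cfVal b| ^ α) := by gcongr
      _ ≤ 8 * (C * Real.exp (-(2 * logDigitSum 0 a (d * m + e))) ^ α) := by
          gcongr
          exact abs_cfVal_sub_le_of_agree fun i hi => hagree hi.ne
      _ = _ := by rw [← Real.exp_mul, mul_assoc]
  have hlog := Real.log_le_log (Real.exp_pos _) hexp
  rw [Real.log_exp, Real.log_mul (by positivity) (Real.exp_pos _).ne', Real.log_exp] at hlog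
  linarith

lemma memHolder_cfDecimate_of_isKhinchinTypical (hd : d ≠ 0) (ha : IsKhinchinTypical a)
    (hae : IsKhinchinTypical fun j => a (d * j + e)) (hα : 0 ≤ α)
    (hlt : α < Real.log (Kconst 0) / (d * Real.log (Kconst 1))) :
    memHolder (cfDecimate d e) Iirr (cfVal a) α := by
  refine memHolder_cfDecimate hd hα (bddAbove_range_of_tendsto_div
    (l := 2 * α * (d * Real.log (Kconst 1)) - 2 * Real.log (Kconst 0)) ?_ ?_)
  · simp only [sub_div, mul_div_assoc]
    exact ((ha.tendsto_logDigitSum_mul_add 1 hd _).const_mul _).sub ((hae 0).const_mul 2)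
  · have hK : 0 < Real.log (Kconst 1) :=
      log_Kconst_zero_pos.trans_le (monotone_log_Kconst zero_le_one)
    rw [lt_div_iff₀ (by positivity)] at hlt
    linarith

lemma le_of_memHolder_cfDecimate (hd : d ≠ 0) (ha : IsKhinchinTypical a)
    (hae : IsKhinchinTypical fun j => a (d * j + e)) (hα : 0 ≤ α)
    (h : memHolder (cfDecimate d e) Iirr (cfVal a) α) :
    α ≤ Real.log (Kconst 1) / (d * Real.log (Kconst 0)) := by
  have hlim := hae.tendsto_logDigitSum_mul_add 1 one_ne_zero 3
  simp only [one_mul, Nat.cast_one] at hlim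
  have hle : 2 * α * (d * Real.log (Kconst 0)) - 2 * Real.log (Kconst 1) ≤ 0 := by
    refine nonpos_of_tendsto_div_of_bddAbove ?_ (bddAbove_of_memHolder_cfDecimate hd hα h)
    simp only [sub_div, mul_div_assoc]
    exact ((ha.tendsto_logDigitSum_mul_add 0 hd e).const_mul _).sub (hlim.const_mul 2)
  have hK := log_Kconst_zero_pos
  rw [le_div_iff₀ (by positivity)]
  linarith

lemma holderExp_mem_Icc {g : ℝ → ℝ} {A : Set ℝ} {x l u : ℝ} (hl₀ : 0 < l) (hl₁ : l ≤ 1)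
    (hlower : ∀ α, 0 ≤ α → α < l → memHolder g A x α)
    (hupper : ∀ α, 0 ≤ α → memHolder g A x α → α ≤ u) :
    holderExp g A x ∈ Set.Icc l u := by
  have hmem {α : ℝ} (h₀ : 0 ≤ α) (hlt : α < l) :
      α ∈ {α : ℝ | α ∈ Set.Icc (0 : ℝ) 1 ∧ memHolder g A x α} :=
    ⟨⟨h₀, hlt.le.trans hl₁⟩, hlower α h₀ hlt⟩
  refine ⟨le_of_forall_lt_imp_le_of_dense fun α hα => ?_,
    csSup_le ⟨0, hmem le_rfl hl₀⟩ fun α hα => hupper α hα.1.1 hα.2⟩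
  exact (le_max_left α 0).trans
    (le_csSup ⟨1, fun β hβ => hβ.1.2⟩ (hmem (le_max_right α 0) (max_lt hα hl₀)))

lemma holderExp_cfDecimate_mem_Icc (hd : d ≠ 0) (ha : IsKhinchinTypical a)
    (hae : IsKhinchinTypical fun j => a (d * j + e)) :
    holderExp (cfDecimate d e) Iirr (cfVal a) ∈
      Set.Icc (Real.log (Kconst 0) / (d * Real.log (Kconst 1)))
        (Real.log (Kconst 1) / (d * Real.log (Kconst 0))) := by
  have hK₀ := log_Kconst_zero_pos
  have hK : Real.log (Kconst 0) ≤ Real.log (Kconst 1) := monotone_log_Kconst zero_le_one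
  have hK₁ := hK₀.trans_le hK
  have hd₁ : (1 : ℝ) ≤ d := by exact_mod_cast Nat.one_le_iff_ne_zero.2 hd
  exact holderExp_mem_Icc (by positivity)
    (div_le_one_of_le₀ (hK.trans (le_mul_of_one_le_left hK₁.le hd₁)) (by positivity))
    (fun _ => memHolder_cfDecimate_of_isKhinchinTypical hd ha hae)
    (fun _ => le_of_memHolder_cfDecimate hd ha hae)

end Decimation

theorem holderExp_cantor_ae_general {d : ℕ} (hd : d ≠ 0) (e : ℕ) :
    ∀ᵐ x : ℝ, x ∈ Iirr →
      holderExp (cfDecimate d e) Iirr x ∈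
        Set.Icc (Real.log (Kconst 0) / (d * Real.log (Kconst 1)))
          (Real.log (Kconst 1) / (d * Real.log (Kconst 0))) := by
  have hae : ∀ᵐ x ∂gaussMeasure, x ∈ Iirr →
      holderExp (cfDecimate d e) Iirr x ∈
        Set.Icc (Real.log (Kconst 0) / (d * Real.log (Kconst 1)))
          (Real.log (Kconst 1) / (d * Real.log (Kconst 0))) := by
    filter_upwards [ae_isKhinchinTypical_gaussDigit one_ne_zero 0,
      ae_isKhinchinTypical_gaussDigit hd e] with x hx hxe hxI
    simp only [one_mul, add_zero] at hx
    simpa only [cfVal_gaussDigit hxI] using holderExp_cfDecimate_mem_Icc hd hx hxe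
  rw [ae_gaussMeasure, ae_restrict_iff' measurableSet_Ioc] at hae
  filter_upwards [hae] with x hx hxI
  exact hx (Set.Ioo_subset_Ioc_self (Iirr_subset_Ioo hxI)) hxI

/-- For Lebesgue-almost every `x ∈ I`, the pointwise Hölder exponents of both components
of Cantor's bijection lie in `[log K₀ / (2 log K₁), log K₁ / (2 log K₀)]`. -/
theorem holderExp_cantor_ae :
    ∀ᵐ x : ℝ, x ∈ Iirr →
      holderExp cantorF1 Iirr x ∈
        Set.Icc (Real.log (Kconst 0) / (2 * Real.log (Kconst 1)))
          (Real.log (Kconst 1) / (2 * Real.log (Kconst 0))) ∧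
      holderExp cantorF2 Iirr x ∈
        Set.Icc (Real.log (Kconst 0) / (2 * Real.log (Kconst 1)))
          (Real.log (Kconst 1) / (2 * Real.log (Kconst 0))) := by
  filter_upwards [holderExp_cantor_ae_general two_ne_zero 0,
    holderExp_cantor_ae_general two_ne_zero 1] with x h₁ h₂ hx
  exact ⟨h₁ hx, h₂ hx⟩
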